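/- For every positive integer n, (κ^{+n},<κ)⤳B_{n+2}(≤n) holds for every infinite cardinal κ, and (λ^{+(n-1)},<λ)⤳B_{n+2}(≤n) fails for every infinite cardinal λ; that is, the Kuratowski index of B_{n+2}(≤n) is exactly n+1. -/

import Mathlib

/-! Both halves are about "free" families.

*Positive half.* Write `hull H E` for the union of all `H X`, `X` a finite subset of `E`.
By induction on `k`, if `D s` (`s` in a finite index set `T`) are sets of cardinality at least
`κ⁺⁽ᵏ⁻¹⁾` (nonempty sets when `k = 0`), then one can choose points `f q s ∈ D s` for
`q ∈ {0,1,2}ᵏ` such that `f p s` avoids `hull H {f p' s' | p' ≤ q}` whenever `p ≰ q`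
(`FreeFam`). In the inductive step (`FreeFam.step`) each `D s` is refined to smaller sets `D t s`,
`t ∈ {0,1,2}`, with `D t s` disjoint from the hull of all the `D t' s'` with `t' < t`: this leaves
room because hulls of sets of the smaller cardinality are too small to exhaust `D s`
(`mk_hull_lt_of_finite`, `mk_hull_le`). The induction hypothesis for the index set `T × {0,1,2}`
then takes care of `p ≰ q` in the first `k` coordinates, and the disjointness of the last one.

The truncated cube `B_{n+2}(≤n)` order-embeds into `{0,1,2}ⁿ⁺¹` (`cubeMap_le_iff`): this is the
statement that its order-dimension is at most `n + 1`.

*Negative half.* On a set of size at most `λ⁺ᵏ` there is a set mapping on finite sets, with values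
of size `< λ`, having no free set with `k + 2` elements (`exists_no_free`); this is the easy
direction of Kuratowski's free set theorem. For `k = n - 1`, the images of the singletons of the
cube would form a free set with `n + 2` elements.
-/

universe u v w

open Cardinal

/-- The relation `(κ,<λ)⤳P`: for every map `F` from the powerset of (a set of size) `κ`
to the subsets of size `< λ`, there is an injective `f : P → κ` such that
`F(f''(P↓x)) ∩ f''(P↓y) ⊆ f''(P↓x)` whenever `x ≤ y` in `P`. -/
def Leadsto (κ lam : Cardinal.{u}) (P : Type v) [PartialOrder P] : Prop :=
  ∀ A : Type u, #A = κ →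
    ∀ F : Set A → Set A, (∀ X : Set A, #↥(F X) < lam) →
      ∃ f : P → A, Function.Injective f ∧
        ∀ x y : P, x ≤ y →
          F (f '' Set.Iic x) ∩ f '' Set.Iic y ⊆ f '' Set.Iic x

/-- The `n`-th cardinal successor `κ⁺ⁿ`. -/
noncomputable def succN (κ : Cardinal.{u}) (n : ℕ) : Cardinal.{u} := Order.succ^[n] κ

/-- The truncated cube `B_m(≤r)`: all subsets `X` of `{0,…,m-1}` with `|X| ≤ r` or
`X = {0,…,m-1}`, ordered by inclusion. -/
abbrev TruncCube (m r : ℕ) : Type := {X : Finset (Fin m) // X.card ≤ r ∨ X = Finset.univ}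

/-! ### Unions of a set mapping over finite subsets -/

/-- The union of the values of the set mapping `H` at all finite subsets of `E`. -/
def hull {A : Type u} (H : Finset A → Set A) (E : Set A) : Set A :=
  ⋃ X : {X : Finset A // (X : Set A) ⊆ E}, H X.1

theorem mem_hull {A : Type u} {H : Finset A → Set A} {E : Set A} {a : A} :
    a ∈ hull H E ↔ ∃ X : Finset A, (X : Set A) ⊆ E ∧ a ∈ H X := by
  simp [hull]

theorem hull_mono {A : Type u} (H : Finset A → Set A) {E E' : Set A} (h : E ⊆ E') :
    hull H E ⊆ hull H E' := by
  intro a ha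
  obtain ⟨X, hX, haX⟩ := mem_hull.1 ha
  exact mem_hull.2 ⟨X, hX.trans h, haX⟩

theorem mk_biUnion_finset_lt {A : Type u} {ι : Type v} {θ : Cardinal.{u}} (hθ : ℵ₀ ≤ θ)
    (S : Finset ι) (B : ι → Set A) (hB : ∀ i ∈ S, #(B i) < θ) :
    #(⋃ i ∈ S, B i : Set A) < θ := by
  classical
  induction S using Finset.induction_on with
  | empty => simpa using aleph0_pos.trans_le hθ
  | insert a S _ ih =>
    rw [Finset.set_biUnion_insert]
    exact (mk_union_le _ _).trans_lt (add_lt_of_lt hθ (hB _ (by simp))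
      (ih fun i hi => hB i (by simp [hi])))

theorem mk_iUnion_lt_of_finite {A : Type u} {ι : Type v} [Finite ι] {θ : Cardinal.{u}}
    (hθ : ℵ₀ ≤ θ) (B : ι → Set A) (hB : ∀ i, #(B i) < θ) :
    #(⋃ i, B i : Set A) < θ := by
  have := Fintype.ofFinite ι
  simpa using mk_biUnion_finset_lt hθ Finset.univ B fun i _ => hB i

theorem mk_hull_lt_of_finite {A : Type u} {H : Finset A → Set A} {κ : Cardinal.{u}}
    (hκ : ℵ₀ ≤ κ) (hH : ∀ X, #(H X) < κ) {E : Set A} (hE : E.Finite) : #(hull H E) < κ := by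
  have : Finite {X : Finset A // (X : Set A) ⊆ E} := by
    refine (((Finset.finite_toSet hE.toFinset.powerset)).subset (?_ :
      {X : Finset A | (X : Set A) ⊆ E} ⊆ _)).to_subtype
    intro X hX
    rw [Finset.mem_coe, Finset.mem_powerset]
    intro a ha
    simpa using hX ha
  exact mk_iUnion_lt_of_finite hκ _ fun X => hH X.1

theorem mk_hull_le {A : Type u} {H : Finset A → Set A} {κ c : Cardinal.{u}}
    (hκ : ℵ₀ ≤ κ) (hc : κ ≤ c) (hH : ∀ X, #(H X) < κ) {E : Set A} (hE : #E ≤ c) :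
    #(hull H E) ≤ c := by
  classical
  have hc0 : ℵ₀ ≤ c := hκ.trans hc
  have h1 : #{X : Finset A // (X : Set A) ⊆ E} ≤ #(Finset E) := by
    refine mk_le_of_injective (f := fun X => X.1.subtype (· ∈ E)) ?_
    rintro ⟨X, hX⟩ ⟨Y, hY⟩ h
    have h := Finset.ext_iff.1 h
    ext a
    constructor
    · intro ha
      simpa using (h ⟨a, hX ha⟩).1 (by simpa using ha)
    · intro ha
      simpa using (h ⟨a, hY ha⟩).2 (by simpa using ha)
  have h2 : #(Finset E) ≤ c := by
    cases finite_or_infinite E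
    · exact (lt_aleph0_of_finite _).le.trans hc0
    · rwa [mk_finset_of_infinite]
  refine (mk_iUnion_le _).trans ?_
  refine (mul_le_mul' (h1.trans h2) (ciSup_le' fun X : {X : Finset A // (X : Set A) ⊆ E} =>
    (hH X.1).le.trans hc)).trans ?_
  exact (mul_eq_self hc0).le

/-! ### Free families indexed by products of chains -/

/-- `FreeFam H Q c`: for every finite family of sets `D s` of cardinality at least `c`, there are
points `f q s ∈ D s` (`q ∈ Q`) such that `f p s ∉ hull H {f p' s' | p' ≤ q}` whenever `p ≰ q`. -/
def FreeFam {A : Type u} (H : Finset A → Set A) (Q : Type) [Preorder Q] (c : Cardinal.{u}) :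
    Prop :=
  ∀ (T : Type) [Finite T] (D : T → Set A), (∀ s, c ≤ #(D s)) →
    ∃ f : Q → T → A, (∀ q s, f q s ∈ D s) ∧
      ∀ p q, ¬ p ≤ q → ∀ s, f p s ∉ hull H {a | ∃ p' s', p' ≤ q ∧ f p' s' = a}

theorem FreeFam.of_embed {A : Type u} {H : Finset A → Set A} {P Q : Type} [Preorder P]
    [Preorder Q] {c : Cardinal.{u}} (h : FreeFam H Q c) (e : P → Q)
    (he : ∀ p q, e p ≤ e q ↔ p ≤ q) : FreeFam H P c := by
  intro T _ D hD
  obtain ⟨f, hf, hfree⟩ := h T D hD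
  refine ⟨fun p s => f (e p) s, fun q s => hf _ s, fun p q hpq s hmem => ?_⟩
  refine hfree (e p) (e q) (by rwa [he]) s (hull_mono H ?_ hmem)
  rintro a ⟨p', s', hp', rfl⟩
  exact ⟨e p', s', (he _ _).2 hp', rfl⟩

/-- Multiplying by a three-element chain raises the required cardinality from `c` to `d`, where
`d` exceeds the cardinality of the hull of any finite union of sets of cardinality `c`. -/
theorem FreeFam.step {A : Type u} {H : Finset A → Set A} {Q : Type} [Preorder Q]
    {c d : Cardinal.{u}} (h : FreeFam H Q c) (hd : ℵ₀ ≤ d) (hcd : c ≤ d)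
    (hsmall : ∀ E : Set A, #E < max ℵ₀ (Order.succ c) → #(hull H E) < d) :
    FreeFam H (Q × Fin 3) d := by
  intro T _ D hD
  have pick : ∀ E : Set A, #E < max ℵ₀ (Order.succ c) →
      ∃ D' : T → Set A, ∀ s, D' s ⊆ D s \ hull H E ∧ #(D' s) = c := by
    intro E hE
    have : ∀ s, ∃ p ⊆ D s \ hull H E, #p = c := by
      intro s
      refine le_mk_iff_exists_subset.1 (hcd.trans ?_)
      by_contra! hlt
      have h1 : #(D s) ≤ #(D s \ hull H E : Set A) + #(hull H E) :=
        (mk_le_mk_of_subset (by intro a ha; by_cases a ∈ hull H E <;> simp_all)).trans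
          (mk_union_le _ _)
      exact absurd ((hD s).trans h1) (not_le.2 (add_lt_of_lt hd hlt (hsmall E hE)))
    choose D' h1 h2 using this
    exact ⟨D', fun s => ⟨h1 s, h2 s⟩⟩
  have hθ : ℵ₀ ≤ max ℵ₀ (Order.succ c) := le_max_left _ _
  have hun : ∀ D' : T → Set A, (∀ s, #(D' s) = c) → #(⋃ s, D' s) < max ℵ₀ (Order.succ c) := by
    intro D' hD'
    refine mk_iUnion_lt_of_finite hθ _ fun s => ?_
    rw [hD']
    exact lt_max_of_lt_right (Order.lt_succ c)
  obtain ⟨D0, h0⟩ := pick ∅ (by simp)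
  have hE1 := hun D0 fun s => (h0 s).2
  obtain ⟨D1, h1⟩ := pick _ hE1
  have hE2 : #(((⋃ s, D0 s) ∪ ⋃ s, D1 s : Set A)) < max ℵ₀ (Order.succ c) :=
    (mk_union_le _ _).trans_lt (add_lt_of_lt hθ hE1 (hun D1 fun s => (h1 s).2))
  obtain ⟨D2, h2⟩ := pick _ hE2
  have hDD : ∃ DD : Fin 3 → T → Set A, (∀ t s, DD t s ⊆ D s) ∧ (∀ t s, c ≤ #(DD t s)) ∧
      ∀ t u, u < t → ∀ s, ∀ a ∈ DD t s,
        ∃ E, (∀ u' ≤ u, ∀ s', DD u' s' ⊆ E) ∧ a ∉ hull H E := by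
    refine ⟨![D0, D1, D2], ?_, ?_, ?_⟩
    · intro t s
      fin_cases t
      · exact fun a ha => ((h0 s).1 ha).1
      · exact fun a ha => ((h1 s).1 ha).1
      · exact fun a ha => ((h2 s).1 ha).1
    · intro t s
      fin_cases t
      · exact (h0 s).2.ge
      · exact (h1 s).2.ge
      · exact (h2 s).2.ge
    · intro t u htu s a ha
      fin_cases t
      · exact absurd htu (by simp)
      · refine ⟨_, ?_, ((h1 s).1 ha).2⟩
        intro u' hu' s'
        have : u' = 0 := by
          have := hu'.trans_lt htu
          simp only [Fin.lt_def] at this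
          ext; simpa using this
        subst this
        exact Set.subset_iUnion D0 s'
      · refine ⟨_, ?_, ((h2 s).1 ha).2⟩
        intro u' hu' s'
        have := hu'.trans_lt htu
        fin_cases u'
        · exact (Set.subset_iUnion D0 s').trans Set.subset_union_left
        · exact (Set.subset_iUnion D1 s').trans Set.subset_union_right
        · exact absurd this (by simp)
  obtain ⟨DD, hsub, hcard, hsep⟩ := hDD
  obtain ⟨f, hf, hfree⟩ := h (T × Fin 3) (fun st => DD st.2 st.1) fun st => hcard _ _
  refine ⟨fun q s => f q.1 (s, q.2), fun q s => hsub _ _ (hf q.1 (s, q.2)), ?_⟩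
  rintro ⟨p, t⟩ ⟨q, u⟩ hpq s hmem
  by_cases hle : p ≤ q
  · have htu : u < t := by
      by_contra! htu
      exact hpq ⟨hle, htu⟩
    obtain ⟨E, hE, hnot⟩ := hsep t u htu s _ (hf p (s, t))
    refine hnot (hull_mono H ?_ hmem)
    rintro a ⟨⟨p', t'⟩, s', hp', rfl⟩
    exact hE t' hp'.2 s' (hf p' (s', t'))
  · refine hfree p q hle (s, t) (hull_mono H ?_ hmem)
    rintro a ⟨⟨p', t'⟩, s', hp', rfl⟩
    exact ⟨p', (s', t'), hp'.1, rfl⟩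

theorem succN_succ (κ : Cardinal.{u}) (k : ℕ) : succN κ (k + 1) = Order.succ (succN κ k) :=
  Function.iterate_succ_apply' _ _ _

theorem le_succN (κ : Cardinal.{u}) (k : ℕ) : κ ≤ succN κ k := by
  induction k with
  | zero => exact le_rfl
  | succ k ih => exact ih.trans (by rw [succN_succ]; exact Order.le_succ _)

theorem freeFam_point {A : Type u} (H : Finset A → Set A) : FreeFam H (Fin 0 → Fin 3) 1 := by
  intro T _ D hD
  have : ∀ s, ∃ a, a ∈ D s := by
    intro s
    have h : #(D s) ≠ 0 := fun h => by simpa [h] using hD s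
    obtain ⟨a⟩ := mk_ne_zero_iff.1 h
    exact ⟨a.1, a.2⟩
  choose f hf using this
  exact ⟨fun _ => f, fun _ => hf, fun p q hpq => absurd (Subsingleton.elim p q).le hpq⟩

theorem freeFam_chains {A : Type u} {H : Finset A → Set A} {κ : Cardinal.{u}} (hκ : ℵ₀ ≤ κ)
    (hH : ∀ X, #(H X) < κ) (k : ℕ) : FreeFam H (Fin (k + 1) → Fin 3) (succN κ k) := by
  have hemb : ∀ (k : ℕ) (p q : Fin (k + 1) → Fin 3),
      ((Fin.tail p, p 0) : (Fin k → Fin 3) × Fin 3) ≤ (Fin.tail q, q 0) ↔ p ≤ q := by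
    intro k p q
    simp only [Prod.mk_le_mk, Pi.le_def, Fin.forall_fin_succ, Fin.tail]
    tauto
  induction k with
  | zero =>
    refine ((freeFam_point H).step (d := κ) hκ (one_le_aleph0.trans hκ) fun E hE => ?_).of_embed
      _ (hemb 0)
    refine mk_hull_lt_of_finite hκ hH (lt_aleph0_iff_set_finite.1 ?_)
    have h2 : Order.succ (1 : Cardinal.{u}) ≤ ℵ₀ := Order.succ_le_of_lt one_lt_aleph0
    rwa [max_eq_left h2] at hE
  | succ k ih =>
    rw [succN_succ]
    have hκk := le_succN κ k
    refine (ih.step (d := Order.succ (succN κ k)) ((hκ.trans hκk).trans (Order.le_succ _))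
      (Order.le_succ _) fun E hE => ?_).of_embed _ (hemb _)
    rw [max_eq_right ((hκ.trans hκk).trans (Order.le_succ _)), Order.lt_succ_iff] at hE
    exact Order.lt_succ_of_le (mk_hull_le hκ hκk hH hE)

/-! ### The order-dimension of the truncated cube -/

open Classical in
/-- The embedding of `B_{n+2}(≤n)` into `{0,1,2}ⁿ⁺¹`. With `s` the last element of `{0,…,n+1}`,
the `i`-th coordinate of `X` is the rank of the largest element of `X` in a linear order on
`{0,…,n+1}` where `i` is largest and `s` is second largest, all smaller elements being
identified. -/
noncomputable def cubeMap (n : ℕ) (X : TruncCube (n + 2) n) (i : Fin (n + 1)) : Fin 3 :=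
  if i.castSucc ∈ X.1 then 2 else if Fin.last (n + 1) ∈ X.1 then 1 else 0

theorem cubeMap_le_iff (n : ℕ) (X Y : TruncCube (n + 2) n) :
    cubeMap n X ≤ cubeMap n Y ↔ X ≤ Y := by
  constructor
  · intro h j hj
    by_contra hjY
    have hY : Y.1.card ≤ n := Y.2.resolve_right fun h => hjY (by rw [h]; simp)
    induction j using Fin.lastCases with
    | cast i =>
      have : cubeMap n X i ≤ cubeMap n Y i := h i
      simp only [cubeMap, hj, hjY, if_true, if_false] at this
      split_ifs at this <;> exact absurd this (by decide)
    | last =>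
      -- `Y` has at most `n` elements, hence omits some element other than the last one.
      obtain ⟨i, hi⟩ : ∃ i : Fin (n + 1), i.castSucc ∉ Y.1 := by
        by_contra! hall
        have : (Finset.univ.map Fin.castSuccEmb : Finset (Fin (n + 2))) ⊆ Y.1 := by
          intro a ha
          obtain ⟨i, -, rfl⟩ := Finset.mem_map.1 ha
          exact hall i
        have := Finset.card_le_card this
        simp at this
        omega
      have : cubeMap n X i ≤ cubeMap n Y i := h i
      simp only [cubeMap, hj, hjY, hi, if_true, if_false] at this
      split_ifs at this <;> exact absurd this (by decide)
  · intro h i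
    have h1 := @h i.castSucc
    have h2 := @h (Fin.last (n + 1))
    change cubeMap n X i ≤ cubeMap n Y i
    unfold cubeMap
    split_ifs <;> first | decide | (exfalso; tauto)

theorem leadsto_cube (n : ℕ) (κ : Cardinal.{u}) (hκ : ℵ₀ ≤ κ) :
    Leadsto (succN κ n) κ (TruncCube (n + 2) n) := by
  classical
  intro A hA F hF
  -- Adjoining `X` to `F X` makes the free family injective.
  obtain ⟨f, -, hf⟩ := ((freeFam_chains (H := fun X : Finset A => F X ∪ X) hκ (fun X =>
    (mk_union_le _ _).trans_lt (add_lt_of_lt hκ (hF _)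
      ((lt_aleph0_of_finite _).trans_le hκ))) n).of_embed _ (cubeMap_le_iff n)) Unit
      (fun _ => Set.univ) (by simp [hA])
  have key : ∀ p x : TruncCube (n + 2) n, ¬ p ≤ x →
      f p () ∉ F ((fun p => f p ()) '' Set.Iic x) ∪ (fun p => f p ()) '' Set.Iic x := by
    intro p x hpx hmem
    have hfin : ((fun p => f p ()) '' Set.Iic x).Finite := Set.toFinite _
    refine hf p x hpx () (mem_hull.2 ⟨hfin.toFinset, ?_, ?_⟩)
    · rw [hfin.coe_toFinset]
      rintro a ⟨p', hp', rfl⟩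
      exact ⟨p', (), hp', rfl⟩
    · simpa only [hfin.coe_toFinset] using hmem
  refine ⟨fun p => f p (), ?_, ?_⟩
  · intro p q hpq
    by_contra hne
    rcases not_and_or.1 (fun h : p ≤ q ∧ q ≤ p => hne (le_antisymm h.1 h.2)) with h | h
    · exact key p q h (Or.inr ⟨q, Set.mem_Iic.2 le_rfl, hpq.symm⟩)
    · exact key q p h (Or.inr ⟨p, Set.mem_Iic.2 le_rfl, hpq⟩)
  · rintro x y - a ⟨ha, p, -, rfl⟩
    by_contra h
    exact key p x (fun hp => h ⟨p, hp, rfl⟩) (Or.inl ha)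

/-! ### Set mappings without large free sets -/

theorem exists_rank {A : Type u} {μ : Cardinal.{u}} (h : #A ≤ μ) :
    ∃ g : A → Ordinal.{u}, Function.Injective g ∧ ∀ a, #{b | g b < g a} < μ := by
  obtain ⟨r, _, hr⟩ := exists_ord_eq A
  refine ⟨Ordinal.typein r, Ordinal.typein_injective r, fun a => lt_of_lt_of_le ?_ h⟩
  have h1 : #{b | Ordinal.typein r b < Ordinal.typein r a} = (Ordinal.typein r a).card := by
    simp only [Ordinal.typein_lt_typein]
    rfl
  rw [h1, ← lt_ord, hr]
  exact Ordinal.typein_lt_type r a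

/-- A set of size at most `λ⁺ᵏ` carries a set mapping with values of size `< λ` without free sets
with `k + 2` elements. In the inductive step, the value at `X` uses set mappings on the initial
segments of a well-ordering below the elements of `X`. -/
theorem exists_no_free {lam : Cardinal.{u}} (hl : ℵ₀ ≤ lam) (k : ℕ) :
    ∀ A : Type u, #A ≤ succN lam k → ∃ H : Finset A → Set A, (∀ X, #(H X) < lam) ∧
      ∀ S : Finset A, S.card = k + 2 →
        ∃ X ⊆ S, X.card ≤ k + 1 ∧ ∃ b ∈ S, b ∉ X ∧ b ∈ H X := by
  classical
  induction k with
  | zero =>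
    intro A hA
    obtain ⟨g, hg, hlt⟩ := exists_rank hA
    refine ⟨fun X => ⋃ a ∈ X, {b | g b < g a},
      fun X => mk_biUnion_finset_lt hl X _ fun a _ => hlt a, fun S hS => ?_⟩
    obtain ⟨x, y, hxy, rfl⟩ := Finset.card_eq_two.1 hS
    rcases lt_or_gt_of_ne (hg.ne hxy) with h | h
    · exact ⟨{y}, by simp, by simp, x, by simp, by simpa, by simpa⟩
    · exact ⟨{x}, by simp, by simp, y, by simp, by simpa using hxy.symm, by simpa⟩
  | succ k ih =>
    intro A hA
    obtain ⟨g, hg, hlt⟩ := exists_rank hA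
    have hle : ∀ a, #{b | g b < g a} ≤ succN lam k := fun a => by
      have := hlt a
      rwa [succN_succ, Order.lt_succ_iff] at this
    choose H hH hfree using fun a => ih {b | g b < g a} (hle a)
    refine ⟨fun X => ⋃ a ∈ X, Subtype.val '' H a (X.subtype (· ∈ {b | g b < g a})),
      fun X => mk_biUnion_finset_lt hl X _ fun a _ => mk_image_le.trans_lt (hH a _),
      fun S hS => ?_⟩
    obtain ⟨a, haS, hmax⟩ := S.exists_max_image g (Finset.card_pos.1 (by omega))
    have hbelow : ∀ b ∈ S.erase a, b ∈ {b | g b < g a} := fun b hb =>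
      (hmax b (Finset.mem_of_mem_erase hb)).lt_of_ne (hg.ne (Finset.ne_of_mem_erase hb))
    obtain ⟨X, hXS, hXc, b, hbS, hbX, hbH⟩ :=
      hfree a ((S.erase a).subtype (· ∈ {b | g b < g a})) (by
        rw [Finset.card_subtype, Finset.filter_true_of_mem hbelow, Finset.card_erase_of_mem haS]
        omega)
    have hXeq : (insert a (X.map (Function.Embedding.subtype _))).subtype
        (· ∈ {b | g b < g a}) = X := by
      ext ⟨c, hc⟩
      have hca : c ≠ a := by
        rintro rfl
        exact lt_irrefl (g c) hc
      have hc' : g c < g a := hc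
      simp [hca, hc']
    refine ⟨insert a (X.map (Function.Embedding.subtype _)), ?_, ?_, b, ?_, ?_, ?_⟩
    · refine Finset.insert_subset haS fun c hc => ?_
      obtain ⟨c', hc', rfl⟩ := Finset.mem_map.1 hc
      exact Finset.mem_of_mem_erase (Finset.mem_subtype.1 (hXS hc'))
    · refine (Finset.card_insert_le _ _).trans ?_
      rw [Finset.card_map]
      omega
    · exact Finset.mem_of_mem_erase (Finset.mem_subtype.1 hbS)
    · intro hmem
      rcases Finset.mem_insert.1 hmem with h | h
      · have hb : g b.1 < g a := b.2
        rw [h] at hb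
        exact lt_irrefl _ hb
      · obtain ⟨c, hc, hcb⟩ := Finset.mem_map.1 h
        exact hbX (Subtype.ext hcb ▸ hc)
    · refine Set.mem_biUnion (Finset.mem_insert_self _ _) ⟨b, ?_, rfl⟩
      rw [hXeq]
      exact hbH

theorem not_leadsto_cube (n : ℕ) (hn : 0 < n) (lam : Cardinal.{u}) (hl : ℵ₀ ≤ lam) :
    ¬ Leadsto (succN lam (n - 1)) lam (TruncCube (n + 2) n) := by
  classical
  intro hlead
  obtain ⟨A, hA⟩ : ∃ A : Type u, #A = succN lam (n - 1) := ⟨_, mk_out _⟩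
  obtain ⟨H, hH, hnofree⟩ := exists_no_free hl (n - 1) A hA.le
  obtain ⟨f, hf, hF⟩ := hlead A hA (fun Y => if Y.Finite then hull H Y else ∅) (fun Y => by
    split_ifs with hY
    · exact mk_hull_lt_of_finite hl hH hY
    · simpa using aleph0_pos.trans_le hl)
  let sing : Fin (n + 2) → TruncCube (n + 2) n := fun i => ⟨{i}, Or.inl (by rwa [Finset.card_singleton])⟩
  have hinj : Function.Injective fun i => f (sing i) := fun i j hij => by
    simpa [sing] using hf hij
  obtain ⟨S, hSsub, hS⟩ := Finset.exists_subset_card_eq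
    (s := Finset.univ.image fun i => f (sing i)) (n := n - 1 + 2) (by
      rw [Finset.card_image_of_injective _ hinj, Finset.card_fin]
      omega)
  obtain ⟨X, hXS, hXc, b, hbS, hbX, hbH⟩ := hnofree S hS
  have hIc : (Finset.univ.filter fun i => f (sing i) ∈ X).card ≤ n := by
    refine (Finset.card_le_card_of_injOn (t := X) _ (fun i hi => ?_) hinj.injOn).trans
      (hXc.trans (by omega))
    simpa using hi
  obtain ⟨j, -, rfl⟩ := Finset.mem_image.1 (hSsub hbS)
  let x : TruncCube (n + 2) n := ⟨Finset.univ.filter fun i => f (sing i) ∈ X, Or.inl hIc⟩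
  let y : TruncCube (n + 2) n := ⟨Finset.univ, Or.inr rfl⟩
  have hle : ∀ z : TruncCube (n + 2) n, z ≤ y := fun z => Finset.subset_univ z.1
  have hXsub : (X : Set A) ⊆ f '' Set.Iic x := by
    intro a ha
    obtain ⟨i, -, rfl⟩ := Finset.mem_image.1 (hSsub (hXS ha))
    refine ⟨sing i, ?_, rfl⟩
    change ({i} : Finset (Fin (n + 2))) ⊆ _
    simpa [x] using ha
  have hmem : f (sing j) ∈ f '' Set.Iic x := by
    refine hF x y (hle x) ⟨?_, sing j, hle _, rfl⟩
    have hfin : (f '' Set.Iic x).Finite := Set.toFinite _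
    simp only [hfin, if_true]
    exact mem_hull.2 ⟨X, hXsub, hbH⟩
  obtain ⟨z, hz, hzj⟩ := hmem
  rw [hf hzj] at hz
  have hjx : j ∈ x.1 := hz (Finset.mem_singleton_self j)
  exact hbX (by simpa [x] using hjx)

/-- `(κ^{+n},<κ)⤳B_{n+2}(≤n)` holds for every infinite `κ`, and
`(λ^{+(n-1)},<λ)⤳B_{n+2}(≤n)` fails for every infinite `λ`: the Kuratowski index of
`B_{n+2}(≤n)` is exactly `n+1`. -/
theorem stmt15 (n : ℕ) (hn : 0 < n) :
    (∀ κ : Cardinal.{u}, ℵ₀ ≤ κ → Leadsto (succN κ n) κ (TruncCube (n + 2) n)) ∧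
    (∀ lam : Cardinal.{u}, ℵ₀ ≤ lam →
      ¬ Leadsto (succN lam (n - 1)) lam (TruncCube (n + 2) n)) := by
  exact ⟨fun κ hκ => leadsto_cube n κ hκ, fun lam hl => not_leadsto_cube n hn lam hl⟩
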